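/- The derivation module D(𝒜₂₃₈) of the central hyperplane arrangement 𝒜₂₃₈ in ℂ⁴ with defining equation Q₂₃₈ = x·y·z·w·(x+y+z−w)·(x+y−z+w)·(x−y+z+w)·(−x+y+z+w) is not a free module over S = ℂ[x,y,z,w]. -/

import Mathlib

open MvPolynomial

noncomputable section

/-- The polynomial ring `S = ℂ[x,y,z,w]`, with `x = X 0`, `y = X 1`, `z = X 2`, `w = X 3`. -/
abbrev S4 : Type := MvPolynomial (Fin 4) ℂ

/-- The linear form `c₀·x + c₁·y + c₂·z + c₃·w` with coefficient vector `c`. -/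
noncomputable def linForm (c : Fin 4 → ℂ) : S4 := ∑ i, C (c i) * X i

/-- A polynomial derivation `θ = a₁∂ₓ + a₂∂_y + a₃∂_z + a₄∂_w` of `S` is identified with
its coefficient tuple `a : Fin 4 → S`; the linear map `derMap f` sends `a` to `θ(f)`. -/
noncomputable def derMap (f : S4) : (Fin 4 → S4) →ₗ[S4] S4 where
  toFun a := ∑ i, a i * pderiv i f
  map_add' a b := by simp [add_mul, Finset.sum_add_distrib]
  map_smul' c a := by simp [Finset.mul_sum, mul_assoc]

/-- The derivation module `D(𝒜)` of the central arrangement whose hyperplanes are the kernels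
of the linear forms `linForm (α H)`: all derivations `θ` with `θ(α_H) ∈ S·α_H` for every `H`. -/
noncomputable def derivModule {ι : Type} (α : ι → (Fin 4 → ℂ)) :
    Submodule S4 (Fin 4 → S4) :=
  ⨅ H, Submodule.comap (derMap (linForm (α H))) (Ideal.span {linForm (α H)})

end

/-- The coefficient vectors of the eight linear factors of Q = xyzw(x+y+z-w)(x+y-z+w)(x-y+z+w)(-x+y+z+w), defining the rigid Cynk–Szemberg octic arrangement 𝒜₂₃₈ ⊂ ℙ³. -/
noncomputable def A238 : Fin 8 → (Fin 4 → ℂ) :=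
  ![![1, 0, 0, 0],
    ![0, 1, 0, 0],
    ![0, 0, 1, 0],
    ![0, 0, 0, 1],
    ![1, 1, 1, -1],
    ![1, 1, -1, 1],
    ![1, -1, 1, 1],
    ![-1, 1, 1, 1]]

lemma pderiv_linForm (c : Fin 4 → ℂ) (i : Fin 4) : pderiv i (linForm c) = C (c i) := by
  simp [linForm, pderiv_X, Pi.single_apply]

lemma derMap_linForm (c : Fin 4 → ℂ) (θ : Fin 4 → S4) :
    derMap (linForm c) θ = ∑ i, θ i * C (c i) := by
  simp [derMap, pderiv_linForm]

lemma mem_derivModule_iff {ι : Type} (α : ι → (Fin 4 → ℂ)) (θ : Fin 4 → S4) :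
    θ ∈ derivModule α ↔ ∀ H, linForm (α H) ∣ ∑ i, θ i * C (α H i) := by
  simp [derivModule, Submodule.mem_iInf, Ideal.mem_span_singleton, derMap_linForm]

/-- The value of a polynomial at the point `(0, 0, 1, 1)`, where exactly four hyperplanes of
the arrangement meet, in general position modulo the line they share. -/
noncomputable def evalPt : S4 →+* ℂ := eval ![0, 0, 1, 1]

/-- The submodule of derivations tangent to the four hyperplanes through `(0, 0, 1, 1)`. -/
noncomputable def localDerivModule : Submodule S4 (Fin 4 → S4) :=
  derivModule ![A238 0, A238 1, A238 4, A238 5]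

lemma derivModule_le_localDerivModule : derivModule A238 ≤ localDerivModule := by
  intro θ hθ
  rw [mem_derivModule_iff] at hθ
  rw [localDerivModule, mem_derivModule_iff]
  intro H
  fin_cases H
  exacts [hθ 0, hθ 1, hθ 4, hθ 5]

/-- The product of the linear forms of the arrangement not vanishing at `(0, 0, 1, 1)`. -/
noncomputable def awayProd : S4 :=
  linForm (A238 2) * linForm (A238 3) * linForm (A238 6) * linForm (A238 7)

lemma evalPt_awayProd : evalPt awayProd = 4 := by
  simp [evalPt, awayProd, linForm, A238, Fin.sum_univ_four]
  norm_num

lemma awayProd_smul_mem {θ : Fin 4 → S4} (hθ : θ ∈ localDerivModule) :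
    awayProd • θ ∈ derivModule A238 := by
  rw [localDerivModule, mem_derivModule_iff] at hθ
  rw [mem_derivModule_iff]
  intro H
  have key : ∑ i, (awayProd • θ) i * C (A238 H i) = awayProd * ∑ i, θ i * C (A238 H i) := by
    simp [Finset.mul_sum, mul_assoc]
  rw [key]
  have h2 : linForm (A238 2) ∣ awayProd :=
    ⟨linForm (A238 3) * linForm (A238 6) * linForm (A238 7), by simp only [awayProd]; ring⟩
  have h3 : linForm (A238 3) ∣ awayProd :=
    ⟨linForm (A238 2) * linForm (A238 6) * linForm (A238 7), by simp only [awayProd]; ring⟩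
  have h6 : linForm (A238 6) ∣ awayProd :=
    ⟨linForm (A238 2) * linForm (A238 3) * linForm (A238 7), by simp only [awayProd]; ring⟩
  have h7 : linForm (A238 7) ∣ awayProd :=
    ⟨linForm (A238 2) * linForm (A238 3) * linForm (A238 6), by simp only [awayProd]; ring⟩
  fin_cases H
  exacts [(hθ 0).mul_left _, (hθ 1).mul_left _, h2.mul_right _, h3.mul_right _,
    (hθ 2).mul_left _, (hθ 3).mul_left _, h6.mul_right _, h7.mul_right _]

/-- A multiple of a linear form vanishing at `(0, 0, 1, 1)` vanishes there, and its gradient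
is proportional to that form. -/
lemma exists_gradient_of_linForm_dvd {c : Fin 4 → ℂ} {f : S4} (hc : evalPt (linForm c) = 0)
    (h : linForm c ∣ f) :
    evalPt f = 0 ∧ ∃ a : ℂ, ∀ i, evalPt (pderiv i f) = a * c i := by
  obtain ⟨g, rfl⟩ := h
  refine ⟨by simp [hc], evalPt g, fun i => ?_⟩
  have hC : evalPt (C (c i)) = c i := by simp [evalPt]
  simp [Derivation.leibniz, pderiv_linForm, hc, hC]

/-- Five functionals on derivations. On `localDerivModule` they factor through the fibre
at `(0, 0, 1, 1)`. -/
noncomputable def fibreMap : (Fin 4 → S4) →+ (Fin 5 → ℂ) where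
  toFun θ := ![evalPt (θ 3),
    evalPt (pderiv 0 (θ 0)),
    evalPt (pderiv 0 (pderiv 0 (θ 0))) - 2 * evalPt (pderiv 0 (pderiv 1 (θ 1))),
    evalPt (pderiv 0 (pderiv 2 (θ 0))) - evalPt (pderiv 1 (pderiv 2 (θ 1))),
    evalPt (pderiv 2 (pderiv 2 (θ 2 - θ 3))) - 2 * evalPt (pderiv 0 (pderiv 2 (θ 0)))]
  map_zero' := by
    ext i; fin_cases i <;> simp
  map_add' θ η := by
    ext i; fin_cases i <;> simp <;> ring

lemma fibreMap_smul {θ : Fin 4 → S4} (hθ : θ ∈ localDerivModule) (s : S4) :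
    fibreMap (s • θ) = evalPt s • fibreMap θ := by
  rw [localDerivModule, mem_derivModule_iff] at hθ
  obtain ⟨hx, a, ha⟩ := exists_gradient_of_linForm_dvd
    (by simp [evalPt, linForm, A238, Fin.sum_univ_four]) (hθ 0)
  obtain ⟨hy, b, hb⟩ := exists_gradient_of_linForm_dvd
    (by simp [evalPt, linForm, A238, Fin.sum_univ_four]) (hθ 1)
  obtain ⟨hu, c, hc⟩ := exists_gradient_of_linForm_dvd
    (by simp [evalPt, linForm, A238, Fin.sum_univ_four]) (hθ 2)
  obtain ⟨hv, d, hd⟩ := exists_gradient_of_linForm_dvd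
    (by simp [evalPt, linForm, A238, Fin.sum_univ_four]) (hθ 3)
  have ha0 := ha 0; have ha1 := ha 1; have ha2 := ha 2
  have hb0 := hb 0; have hb1 := hb 1; have hb2 := hb 2
  have hc0 := hc 0; have hc1 := hc 1; have hc2 := hc 2
  have hd0 := hd 0; have hd1 := hd 1; have hd2 := hd 2
  simp [A238, Fin.sum_univ_four] at hx hy hu hv ha0 ha1 ha2 hb0 hb1 hb2 hc0 hc1 hc2 hd0 hd1 hd2
  have e1 : c = a := by grind
  have e2 : b = a := by grind
  have e3 : evalPt (θ 2) = evalPt (θ 3) := by grind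
  have e4 : evalPt (pderiv 2 (θ 2)) = a + evalPt (pderiv 2 (θ 3)) := by grind
  ext i
  fin_cases i
  · simp [fibreMap]
  · simp [fibreMap, Derivation.leibniz, hx]
  · simp [fibreMap, Derivation.leibniz, hx, hy, ha0, hb0, hb1, e2]; ring
  · simp [fibreMap, Derivation.leibniz, hx, hy, ha0, ha2, hb1, hb2, e2]; ring
  · simp [fibreMap, Derivation.leibniz, hx, ha0, ha2, e3, e4]; ring

/-- Derivations tangent to the four hyperplanes through `(0, 0, 1, 1)`, linearly independent
in the fibre at that point. -/
noncomputable def localGen : Fin 5 → Fin 4 → S4 :=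
  ![![0, 0, 1, 1],
    ![X 0, X 1, X 2 - X 3, 0],
    ![X 0 * X 1, -(X 0 * X 1), 0, 0],
    ![X 0 * (X 0 + X 1 + X 2 - X 3), 0, X 0 * (X 0 + X 1 + X 2 - X 3), 0],
    ![0, 0, (X 0 + X 1 + X 2 - X 3) * (X 0 + X 1 - X 2 + X 3), 0]]

lemma localGen_mem (j : Fin 5) : localGen j ∈ localDerivModule := by
  have key (q : Fin 4 → S4) (h : ∀ H : Fin 4,
      ∑ i, localGen j i * C (![A238 0, A238 1, A238 4, A238 5] H i) =
        linForm (![A238 0, A238 1, A238 4, A238 5] H) * q H) :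
      localGen j ∈ localDerivModule := by
    rw [localDerivModule, mem_derivModule_iff]
    exact fun H => ⟨q H, h H⟩
  fin_cases j
  · apply key ![0, 0, 0, 0]
    intro H; fin_cases H <;> simp [localGen, A238, linForm, Fin.sum_univ_four]
  · apply key ![1, 1, 1, 1]
    intro H; fin_cases H <;> simp [localGen, A238, linForm, Fin.sum_univ_four] <;> ring
  · apply key ![X 1, -X 0, 0, 0]
    intro H; fin_cases H <;> simp [localGen, A238, linForm, Fin.sum_univ_four, mul_comm]
  · apply key ![X 0 + X 1 + X 2 - X 3, 0, 2 * X 0, 0]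
    intro H; fin_cases H <;> simp [localGen, A238, linForm, Fin.sum_univ_four] <;> ring
  · apply key ![0, 0, X 0 + X 1 - X 2 + X 3, -(X 0 + X 1 + X 2 - X 3)]
    intro H; fin_cases H <;>
      simp [localGen, A238, linForm, Fin.sum_univ_four, -mul_eq_mul_right_iff] <;>
      ring

lemma fibreMap_localGen (j : Fin 5) :
    fibreMap (localGen j) = ![![1, 0, 0, 0, 0], ![0, 1, 0, 0, 0], ![0, 0, 2, 0, 0],
      ![0, 0, 2, 1, -2], ![0, 0, 0, 0, -2]] j := by
  have hX : ∀ i, evalPt (X i) = ![0, 0, 1, 1] i := fun i => by simp [evalPt]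
  fin_cases j <;>
    simp [fibreMap, localGen, hX, Derivation.leibniz, pderiv_X] <;> norm_num

lemma eq_top_of_fibreMap_localGen_mem {V : Submodule ℂ (Fin 5 → ℂ)}
    (h : ∀ j, fibreMap (localGen j) ∈ V) : V = ⊤ := by
  rw [eq_top_iff]
  intro v _
  have hv : v = v 0 • fibreMap (localGen 0) + v 1 • fibreMap (localGen 1)
      + ((v 2 - 2 * v 3) / 2) • fibreMap (localGen 2) + v 3 • fibreMap (localGen 3)
      + (-(v 4 + 2 * v 3) / 2) • fibreMap (localGen 4) := by
    ext i
    fin_cases i <;> simp [fibreMap_localGen] <;> ring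
  rw [hv]
  exact V.add_mem (V.add_mem (V.add_mem (V.add_mem (V.smul_mem _ (h 0)) (V.smul_mem _ (h 1)))
    (V.smul_mem _ (h 2))) (V.smul_mem _ (h 3))) (V.smul_mem _ (h 4))

/-- The derivation module of 𝒜₂₃₈ is not a free `S`-module. -/
theorem not_free_A238 : ¬ Module.Free S4 ↥(derivModule A238) := by
  intro hfree
  let b := Module.Free.chooseBasis S4 (derivModule A238)
  have hcard : Fintype.card (Module.Free.ChooseBasisIndex S4 (derivModule A238)) ≤ 4 := by
    rw [← Module.finrank_eq_card_basis b]
    simpa using Submodule.finrank_le (derivModule A238)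
  let V := Submodule.span ℂ (Set.range fun i => fibreMap (b i : Fin 4 → S4))
  have hmem (j : Fin 5) : fibreMap (localGen j) ∈ V := by
    let η : derivModule A238 := ⟨_, awayProd_smul_mem (localGen_mem j)⟩
    have hη : awayProd • localGen j = ∑ i, b.repr η i • (b i : Fin 4 → S4) := by
      have h := congrArg (derivModule A238).subtype (b.sum_repr η)
      rw [map_sum] at h
      exact h.symm
    have h4 : (4 : ℂ) • fibreMap (localGen j) ∈ V := by
      rw [← evalPt_awayProd, ← fibreMap_smul (localGen_mem j), hη, map_sum]
      refine V.sum_mem fun i _ => ?_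
      rw [fibreMap_smul (derivModule_le_localDerivModule (b i).2)]
      exact V.smul_mem _ (Submodule.subset_span ⟨i, rfl⟩)
    exact (V.smul_mem_iff (by norm_num)).1 h4
  have hV := eq_top_of_fibreMap_localGen_mem hmem
  have hrank : Module.finrank ℂ V ≤ 4 := (finrank_range_le_card _).trans hcard
  rw [hV, finrank_top] at hrank
  simp at hrank
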